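/- Let W be a discrete memoryless channel with R_cr < C, and suppose Q ∈ P(𝒳) and R > 0 are such that the pair (Q,W) is singular and R_cr(Q) < R < I(Q;W). Then there exists a constant K₁ > 0, depending only on W, R and Q, such that for every positive integer N the ensemble average error probability satisfies P̄_e(Q,N,R) ≤ (K₁/√N) · e^{−N·E_r(R,Q)}. -/

import Mathlib

open Real BigOperators
open scoped Classical

namespace RCB

/-- A probability distribution on a finite alphabet. -/
def IsDist {α : Type*} [Fintype α] (Q : α → ℝ) : Prop :=
  (∀ a, 0 ≤ Q a) ∧ ∑ a, Q a = 1

/-- A discrete memoryless channel, i.e. a stochastic matrix from `X` to `Y`. -/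
def IsChannel {X Y : Type*} [Fintype X] [Fintype Y] (W : X → Y → ℝ) : Prop :=
  (∀ x y, 0 ≤ W x y) ∧ ∀ x, ∑ y, W x y = 1

/-- The Gallager function `E_o(ρ, Q)`. -/
noncomputable def Eo {X Y : Type*} [Fintype X] [Fintype Y]
    (W : X → Y → ℝ) (ρ : ℝ) (Q : X → ℝ) : ℝ :=
  - Real.log (∑ y, (∑ x, Q x * W x y ^ (1 / (1 + ρ))) ^ (1 + ρ))

/-- The random coding exponent `E_r(R, Q)` for input distribution `Q`. -/
noncomputable def ErQ {X Y : Type*} [Fintype X] [Fintype Y]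
    (W : X → Y → ℝ) (R : ℝ) (Q : X → ℝ) : ℝ :=
  sSup ((fun ρ => -ρ * R + Eo W ρ Q) '' Set.Icc (0 : ℝ) 1)

/-- The random coding exponent `E_r(R)`. -/
noncomputable def Er {X Y : Type*} [Fintype X] [Fintype Y]
    (W : X → Y → ℝ) (R : ℝ) : ℝ :=
  sSup {v : ℝ | ∃ Q : X → ℝ, IsDist Q ∧ v = ErQ W R Q}

/-- The mutual information `I(Q; W)` (natural logarithm). -/
noncomputable def MI {X Y : Type*} [Fintype X] [Fintype Y]
    (W : X → Y → ℝ) (Q : X → ℝ) : ℝ :=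
  ∑ x, ∑ y, Q x * W x y * Real.log (W x y / ∑ x', Q x' * W x' y)

/-- The capacity `C = max_Q I(Q;W)`. -/
noncomputable def Capacity {X Y : Type*} [Fintype X] [Fintype Y]
    (W : X → Y → ℝ) : ℝ :=
  sSup {v : ℝ | ∃ Q : X → ℝ, IsDist Q ∧ v = MI W Q}

/-- The critical rate of the input distribution `Q`:
`R_cr(Q) = ∂E_o(ρ,Q)/∂ρ |_{ρ=1}`. -/
noncomputable def RcrQ {X Y : Type*} [Fintype X] [Fintype Y]
    (W : X → Y → ℝ) (Q : X → ℝ) : ℝ :=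
  deriv (fun ρ => Eo W ρ Q) 1

/-- The critical rate of the channel: the largest `R` with
`E_r(R) = -R + max_Q E_o(1,Q)`. -/
noncomputable def Rcr {X Y : Type*} [Fintype X] [Fintype Y]
    (W : X → Y → ℝ) : ℝ :=
  sSup {R : ℝ | Er W R = -R + sSup {v : ℝ | ∃ Q : X → ℝ, IsDist Q ∧ v = Eo W 1 Q}}

/-- The rate `R_∞ = inf {R ≥ 0 : E_SP(R) < ∞}` (finiteness of the
sphere-packing exponent expressed as boundedness of the family of affine maps). -/
noncomputable def Rinf {X Y : Type*} [Fintype X] [Fintype Y]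
    (W : X → Y → ℝ) : ℝ :=
  sInf {R : ℝ | 0 ≤ R ∧
    BddAbove {v : ℝ | ∃ (Q : X → ℝ) (ρ : ℝ), IsDist Q ∧ 0 ≤ ρ ∧ v = -ρ * R + Eo W ρ Q}}

/-- The pair `(Q, W)` is singular if `W(y|x) = W(y|z)` whenever
`Q(x)W(y|x)Q(z)W(y|z) > 0`. -/
def Singular {X Y : Type*} (W : X → Y → ℝ) (Q : X → ℝ) : Prop :=
  ∀ x y z, 0 < Q x * W x y * (Q z * W z y) → W x y = W z y

/-- `ρ^*_R(Q) = -∂E_r(a,Q)/∂a |_{a=R}`. -/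
noncomputable def rhoStarQ {X Y : Type*} [Fintype X] [Fintype Y]
    (W : X → Y → ℝ) (Q : X → ℝ) (R : ℝ) : ℝ :=
  - deriv (fun a => ErQ W a Q) R

/-- The number of messages of an `(N, R)` code: `⌈exp (N R)⌉`. -/
noncomputable def nMsgs (N : ℕ) (R : ℝ) : ℕ := ⌈Real.exp (N * R)⌉₊

/-- The `N`-fold memoryless extension of the channel `W`. -/
noncomputable def Wn {X Y : Type*} (W : X → Y → ℝ) {N : ℕ}
    (c : Fin N → X) (y : Fin N → Y) : ℝ :=
  ∏ n, W (c n) (y n)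

/-- The maximal error probability of the code `(f, φ)` over the `N`-fold
memoryless extension of `W`. -/
noncomputable def Pmax {X Y : Type*} [Fintype X] [Fintype Y] {M N : ℕ}
    (W : X → Y → ℝ) (f : Fin M → Fin N → X) (φ : (Fin N → Y) → Fin M) : ℝ :=
  ⨆ m : Fin M, ∑ y : Fin N → Y, Wn W (f m) y * (if φ y ≠ m then (1 : ℝ) else 0)

/-- The ensemble average error probability `P̄_e(Q, N, R)`: the `⌈exp (N R)⌉`
codewords are drawn i.i.d. from `Q^N` and decoded by maximum-likelihood
decoding, ties counted as errors. -/
noncomputable def Pbar {X Y : Type*} [Fintype X] [Fintype Y]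
    (W : X → Y → ℝ) (Q : X → ℝ) (N : ℕ) (R : ℝ) : ℝ :=
  ∑ c : Fin (nMsgs N R) → Fin N → X,
    (∏ m, ∏ n, Q (c m n)) *
      ((nMsgs N R : ℝ)⁻¹ *
        ∑ m, ∑ y : Fin N → Y,
          Wn W (c m) y *
            (if ∃ m', m' ≠ m ∧ Wn W (c m) y ≤ Wn W (c m') y then (1 : ℝ) else 0))

/-- The tilted output distribution `f_ρ`. -/
noncomputable def fRho {X Y : Type*} [Fintype X] [Fintype Y]
    (W : X → Y → ℝ) (Q : X → ℝ) (ρ : ℝ) (y : Y) : ℝ :=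
  (∑ x, Q x * W x y ^ (1 / (1 + ρ))) ^ (1 + ρ) /
    ∑ b, (∑ a, Q a * W a b ^ (1 / (1 + ρ))) ^ (1 + ρ)

/-- The cumulant generating function
`Λ_ρ(λ) = log E_{P_{X,Y}}[exp(λ log (f_ρ(Y)/W(Y|X)))]` with `P_{X,Y} = Q × W`. -/
noncomputable def Lam {X Y : Type*} [Fintype X] [Fintype Y]
    (W : X → Y → ℝ) (Q : X → ℝ) (ρ : ℝ) (t : ℝ) : ℝ :=
  Real.log (∑ x, ∑ y, Q x * W x y * Real.exp (t * Real.log (fRho W Q ρ y / W x y)))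

/-- `P_{X,Y,Z}(S̃_Q)` where `P_{X,Y,Z}(x,y,z) = Q(x)W(y|x)Q(z)` and
`S̃_Q = {(x,y,z) : Q(x)W(y|x)Q(z)W(y|z) > 0}`. -/
noncomputable def PStilde {X Y : Type*} [Fintype X] [Fintype Y]
    (W : X → Y → ℝ) (Q : X → ℝ) : ℝ :=
  ∑ x, ∑ y, ∑ z,
    if 0 < Q x * W x y * (Q z * W z y) then Q x * W x y * Q z else 0

/-- The bivariate cumulant generating function `Λ_{1,ρ}(v)` with respect to the
conditional distribution `P̃_{X,Y,Z}` of `P_{X,Y,Z}` given `S̃_Q`. -/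
noncomputable def Lam1 {X Y : Type*} [Fintype X] [Fintype Y]
    (W : X → Y → ℝ) (Q : X → ℝ) (ρ : ℝ) (v : ℝ × ℝ) : ℝ :=
  Real.log ((∑ x, ∑ y, ∑ z,
    if 0 < Q x * W x y * (Q z * W z y) then
      Q x * W x y * Q z *
        Real.exp (v.1 * Real.log (W x y / fRho W Q ρ y) +
          v.2 * Real.log (W z y / W x y))
    else 0) / PStilde W Q)

/-- The subdifferential of `f : ℝ → ℝ` at `R` (for convex `f`). -/
def Subderiv (f : ℝ → ℝ) (R : ℝ) : Set ℝ :=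
  {g : ℝ | ∀ x, f R + g * (x - R) ≤ f x}

/-- The tilted backward channel `P^ρ_{X|Y}`. -/
noncomputable def PXgY {X Y : Type*} [Fintype X]
    (W : X → Y → ℝ) (Q : X → ℝ) (ρ : ℝ) (x : X) (y : Y) : ℝ :=
  Q x * W x y ^ (1 / (1 + ρ)) / ∑ a, Q a * W a y ^ (1 / (1 + ρ))

/-- The tilted joint distribution `P^ρ_{X,Y}(x,y) = P^ρ_{X|Y}(x|y) P^ρ_Y(y)`. -/
noncomputable def PXY {X Y : Type*} [Fintype X] [Fintype Y]
    (W : X → Y → ℝ) (Q : X → ℝ) (ρ : ℝ) (x : X) (y : Y) : ℝ :=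
  PXgY W Q ρ x y * fRho W Q ρ y

/-!
For a singular pair, the likelihood of an output is the same for all inputs that can reach it, so
decoding fails exactly when another codeword can also reach the output. With `Z` the information
density, which is minus the logarithm of the probability of reaching the output, the union bound
therefore gives `E min(1, exp(N R - ∑ Zₙ))` for i.i.d. outputs. As `R` lies strictly between the
critical rate and the mutual information, the maximum defining `E_r(R, Q)` is attained at an
interior `ρ`, and tilting by `exp(-ρ Z)` extracts `exp(-N E_r(R, Q))` and leaves
`E exp(-η |∑ Zₙ - N R|)` with `η = min(ρ, 1 - ρ) > 0`. Finally `Z` is not constant, so Esseen's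
smoothing inequality shows that `∑ Zₙ` falls in any given unit interval with probability
`O(1/√N)`, which yields the extra factor.
-/

section Iid

variable {ι α : Type*} [Fintype ι] {P : α → ℝ}

/-- The product distribution `P^ι` on words `ι → α`, i.e. the law of i.i.d. letters. As codewords
are themselves words, a random code with i.i.d. letters has law `iid (iid Q)`. -/
noncomputable def iid (P : α → ℝ) (c : ι → α) : ℝ := ∏ i, P (c i)

theorem iid_nonneg (hP : ∀ a, 0 ≤ P a) (c : ι → α) : 0 ≤ iid P c :=
  Finset.prod_nonneg fun i _ => hP (c i)

theorem sum_iid_mul_prod [DecidableEq ι] [Fintype α] (hP : ∑ a, P a = 1) (s : Finset ι)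
    (f : ι → α → ℝ) :
    ∑ c : ι → α, iid P c * ∏ i ∈ s, f i (c i) = ∏ i ∈ s, ∑ a, P a * f i a := by
  have hfactor : ∀ i, ∑ a, P a * (if i ∈ s then f i a else 1) =
      if i ∈ s then ∑ a, P a * f i a else 1 := fun i => by split_ifs <;> simp [hP]
  have h := Fintype.prod_sum fun i a => P a * if i ∈ s then f i a else 1
  simpa only [hfactor, Finset.prod_mul_distrib, Finset.prod_ite_mem, Finset.univ_inter, iid]
    using h.symm

theorem sum_iid_mul_apply [DecidableEq ι] [Fintype α] (hP : ∑ a, P a = 1) (i : ι) (f : α → ℝ) :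
    ∑ c : ι → α, iid P c * f (c i) = ∑ a, P a * f a := by
  simpa only [Finset.prod_singleton] using sum_iid_mul_prod hP {i} fun _ => f

theorem sum_iid_mul_apply_mul_apply [DecidableEq ι] [Fintype α] (hP : ∑ a, P a = 1) {i j : ι}
    (hij : i ≠ j) (f g : α → ℝ) :
    ∑ c : ι → α, iid P c * (f (c i) * g (c j)) = (∑ a, P a * f a) * ∑ a, P a * g a := by
  simpa only [Finset.prod_pair hij, if_true, if_neg hij.symm] using
    sum_iid_mul_prod hP {i, j} fun k => if k = i then f else g

theorem isDist_iid [DecidableEq ι] [Fintype α] (hP : IsDist P) :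
    IsDist (iid P : (ι → α) → ℝ) :=
  ⟨iid_nonneg hP.1, by simpa using sum_iid_mul_prod hP.2 (∅ : Finset ι) fun _ _ => 1⟩

theorem IsDist.exists_pos [Fintype α] (hP : IsDist P) : ∃ a, 0 < P a := by
  obtain ⟨a, -, ha⟩ := Finset.exists_ne_zero_of_sum_ne_zero (hP.2.trans_ne one_ne_zero)
  exact ⟨a, (hP.1 a).lt_of_ne' ha⟩

end Iid

section Concentration

variable {α : Type*} [Fintype α] {P : α → ℝ}

/-- The characteristic function of the random variable `S` under the weights `P`. -/
noncomputable def charFn (P S : α → ℝ) (θ : ℝ) : ℂ :=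
  ∑ a, (P a : ℂ) * Complex.exp ((θ * S a : ℝ) * Complex.I)

theorem continuous_charFn (P S : α → ℝ) : Continuous (charFn P S) := by
  unfold charFn
  fun_prop

theorem sum_mul_cos_le_norm_charFn (P S : α → ℝ) (θ t : ℝ) :
    ∑ a, P a * cos (θ * (S a - t)) ≤ ‖charFn P S θ‖ := by
  have hre : ∑ a, P a * cos (θ * (S a - t)) =
      (Complex.exp ((-(θ * t) : ℝ) * Complex.I) * charFn P S θ).re := by
    rw [charFn, Finset.mul_sum, Complex.re_sum]
    refine Finset.sum_congr rfl fun a _ => ?_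
    rw [mul_left_comm, ← Complex.exp_add, ← add_mul, ← Complex.ofReal_add, Complex.re_ofReal_mul,
      Complex.exp_ofReal_mul_I_re]
    congr 2
    ring
  calc ∑ a, P a * cos (θ * (S a - t))
      ≤ ‖Complex.exp ((-(θ * t) : ℝ) * Complex.I) * charFn P S θ‖ :=
        hre.trans_le (Complex.re_le_norm _)
    _ = ‖charFn P S θ‖ := by rw [norm_mul, Complex.norm_exp_ofReal_mul_I, one_mul]

theorem norm_charFn_sq (P S : α → ℝ) (θ : ℝ) :
    ‖charFn P S θ‖ ^ 2 = ∑ a, ∑ b, P a * P b * cos (θ * (S a - S b)) := by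
  rw [← Complex.normSq_eq_norm_sq, Complex.normSq_apply, charFn, Complex.re_sum, Complex.im_sum]
  simp only [Complex.re_ofReal_mul, Complex.im_ofReal_mul, Complex.exp_ofReal_mul_I_re,
    Complex.exp_ofReal_mul_I_im, Finset.sum_mul_sum, ← Finset.sum_add_distrib]
  refine Finset.sum_congr rfl fun a _ => Finset.sum_congr rfl fun b _ => ?_
  rw [mul_sub, cos_sub]
  ring

theorem IsDist.norm_charFn_sq_le (hP : IsDist P) (S : α → ℝ) (a b : α) (θ : ℝ) :
    ‖charFn P S θ‖ ^ 2 ≤ 1 - P a * P b * (1 - cos (θ * (S a - S b))) := by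
  have hnonneg : ∀ a b, 0 ≤ P a * P b * (1 - cos (θ * (S a - S b))) := fun a b =>
    mul_nonneg (mul_nonneg (hP.1 a) (hP.1 b)) (sub_nonneg.mpr (cos_le_one _))
  have hle : P a * P b * (1 - cos (θ * (S a - S b))) ≤
      ∑ a, ∑ b, P a * P b * (1 - cos (θ * (S a - S b))) :=
    (Finset.single_le_sum (fun b _ => hnonneg a b) (Finset.mem_univ b)).trans
      (Finset.single_le_sum (f := fun a => ∑ b, P a * P b * (1 - cos (θ * (S a - S b))))
        (fun a _ => Finset.sum_nonneg fun b _ => hnonneg a b) (Finset.mem_univ a))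
  have htotal : ∑ a, ∑ b, P a * P b * (1 - cos (θ * (S a - S b))) = 1 - ‖charFn P S θ‖ ^ 2 := by
    simp only [mul_sub, mul_one, Finset.sum_sub_distrib, norm_charFn_sq, ← Finset.sum_mul_sum, hP.2]
  linarith

theorem IsDist.norm_charFn_le_exp_neg_sq (hP : IsDist P) (S : α → ℝ) {a b : α} {θ : ℝ}
    (hθ : |θ * (S a - S b)| ≤ π) :
    ‖charFn P S θ‖ ≤ exp (-(P a * P b * (S a - S b) ^ 2 / π ^ 2) * θ ^ 2) := by
  refine le_of_sq_le_sq ?_ (exp_pos _).le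
  calc ‖charFn P S θ‖ ^ 2 ≤ 1 - P a * P b * (1 - cos (θ * (S a - S b))) :=
        hP.norm_charFn_sq_le S a b θ
    _ ≤ 1 - P a * P b * (2 / π ^ 2 * (θ * (S a - S b)) ^ 2) := by
        gcongr
        · exact mul_nonneg (hP.1 a) (hP.1 b)
        · linarith [cos_le_one_sub_mul_cos_sq hθ]
    _ ≤ exp (-(P a * P b * (2 / π ^ 2 * (θ * (S a - S b)) ^ 2))) := one_sub_le_exp_neg _
    _ = exp (-(P a * P b * (S a - S b) ^ 2 / π ^ 2) * θ ^ 2) ^ 2 := by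
        rw [← exp_nat_mul]
        push_cast
        ring_nf

theorem charFn_iid {ι : Type*} [Fintype ι] [DecidableEq ι] (P z : α → ℝ) (θ : ℝ) :
    charFn (iid P) (fun ω : ι → α => ∑ i, z (ω i)) θ = charFn P z θ ^ Fintype.card ι := by
  rw [charFn, charFn, ← Finset.card_univ, ← Finset.prod_const, Fintype.prod_sum]
  refine Finset.sum_congr rfl fun ω _ => ?_
  rw [Finset.prod_mul_distrib, ← Complex.exp_sum, iid]
  push_cast
  rw [Finset.mul_sum, Finset.sum_mul]

theorem continuous_intervalIntegral_sub {f : ℝ → ℝ} (hf : Continuous f) (δ : ℝ) :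
    Continuous fun u => ∫ v in (0 : ℝ)..δ, f (u - v) :=
  intervalIntegral.continuous_parametric_intervalIntegral_of_continuous' (by fun_prop) 0 δ

theorem intervalIntegral_intervalIntegral_sub_mono {f g : ℝ → ℝ} (hf : Continuous f)
    (hg : Continuous g) {δ : ℝ} (hδ : 0 ≤ δ) (hfg : ∀ θ, |θ| ≤ δ → f θ ≤ g θ) :
    ∫ u in (0 : ℝ)..δ, ∫ v in (0 : ℝ)..δ, f (u - v) ≤
      ∫ u in (0 : ℝ)..δ, ∫ v in (0 : ℝ)..δ, g (u - v) := by
  refine intervalIntegral.integral_mono_on hδ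
    ((continuous_intervalIntegral_sub hf δ).intervalIntegrable 0 δ)
    ((continuous_intervalIntegral_sub hg δ).intervalIntegrable 0 δ) fun u hu =>
    intervalIntegral.integral_mono_on hδ (Continuous.intervalIntegrable (by fun_prop) 0 δ)
      (Continuous.intervalIntegrable (by fun_prop) 0 δ) fun v hv => hfg _ ?_
  exact abs_le.mpr ⟨by linarith [hu.1, hv.2], by linarith [hu.2, hv.1]⟩

theorem intervalIntegral_exp_neg_mul_sub_sq_le {b δ : ℝ} (hb : 0 < b) (hδ : 0 ≤ δ) (u : ℝ) :
    ∫ v in (0 : ℝ)..δ, exp (-b * (u - v) ^ 2) ≤ √(π / b) := by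
  calc ∫ v in (0 : ℝ)..δ, exp (-b * (u - v) ^ 2)
      = ∫ v in Set.Ioc 0 δ, exp (-b * (u - v) ^ 2) := intervalIntegral.integral_of_le hδ
    _ ≤ ∫ v, exp (-b * (u - v) ^ 2) :=
        MeasureTheory.setIntegral_le_integral ((integrable_exp_neg_mul_sq hb).comp_sub_left u)
          (.of_forall fun v => (exp_pos _).le)
    _ = √(π / b) := by
        rw [MeasureTheory.integral_sub_left_eq_self (fun v => exp (-b * v ^ 2)), integral_gaussian]

theorem intervalIntegral_intervalIntegral_exp_neg_mul_sub_sq_le {b δ : ℝ} (hb : 0 < b)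
    (hδ : 0 ≤ δ) :
    ∫ u in (0 : ℝ)..δ, ∫ v in (0 : ℝ)..δ, exp (-b * (u - v) ^ 2) ≤ δ * √(π / b) := by
  have hcont := continuous_intervalIntegral_sub (f := fun θ => exp (-b * θ ^ 2)) (by fun_prop) δ
  calc _ ≤ ∫ _u in (0 : ℝ)..δ, √(π / b) :=
        intervalIntegral.integral_mono_on hδ (hcont.intervalIntegrable 0 δ) (by simp)
          fun u _ => intervalIntegral_exp_neg_mul_sub_sq_le hb hδ u
    _ = δ * √(π / b) := by simp

/-- The Fejér kernel on the line, `|∫₀^δ e^{iux} du|²`, written as a superposition of the waves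
`e^{iθx}` with `|θ| ≤ δ`, so that averaging over `x` only involves characteristic functions. -/
noncomputable def fejerKernel (δ x : ℝ) : ℝ :=
  ∫ u in (0 : ℝ)..δ, ∫ v in (0 : ℝ)..δ, cos ((u - v) * x)

theorem fejerKernel_nonneg (δ x : ℝ) : 0 ≤ fejerKernel δ x := by
  have hint : ∀ {f : ℝ → ℝ}, Continuous f → IntervalIntegrable f MeasureTheory.volume 0 δ :=
    fun hf => hf.intervalIntegrable 0 δ
  have hsq : fejerKernel δ x =
      (∫ u in (0 : ℝ)..δ, cos (u * x)) ^ 2 + (∫ u in (0 : ℝ)..δ, sin (u * x)) ^ 2 := by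
    simp only [fejerKernel, sub_mul, cos_sub]
    rw [intervalIntegral.integral_congr fun u _ =>
      intervalIntegral.integral_add (hint (by fun_prop)) (hint (by fun_prop))]
    simp only [intervalIntegral.integral_const_mul]
    rw [intervalIntegral.integral_add (hint (by fun_prop)) (hint (by fun_prop))]
    simp only [intervalIntegral.integral_mul_const, sq]
  rw [hsq]
  positivity

theorem sq_div_two_le_fejerKernel {δ x : ℝ} (hδ : 0 ≤ δ) (hx : δ * |x| ≤ 1) :
    δ ^ 2 / 2 ≤ fejerKernel δ x := by
  have hcos : ∀ θ, |θ| ≤ δ → 1 / 2 ≤ cos (θ * x) := by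
    intro θ hθ
    have habs : |θ * x| ≤ 1 := by
      rw [abs_mul]
      exact (mul_le_mul_of_nonneg_right hθ (abs_nonneg x)).trans hx
    linarith [one_sub_sq_div_two_le_cos (x := θ * x), (sq_le_one_iff_abs_le_one _).mpr habs]
  calc δ ^ 2 / 2 = ∫ _u in (0 : ℝ)..δ, ∫ _v in (0 : ℝ)..δ, (1 / 2 : ℝ) := by
        simp only [intervalIntegral.integral_const, sub_zero, smul_eq_mul]
        ring
    _ ≤ fejerKernel δ x :=
        intervalIntegral_intervalIntegral_sub_mono continuous_const (by fun_prop) hδ hcos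

theorem sum_mul_fejerKernel (P S : α → ℝ) (δ t : ℝ) :
    ∑ a, P a * fejerKernel δ (S a - t) =
      ∫ u in (0 : ℝ)..δ, ∫ v in (0 : ℝ)..δ, ∑ a, P a * cos ((u - v) * (S a - t)) := by
  simp only [fejerKernel, ← intervalIntegral.integral_const_mul]
  rw [← intervalIntegral.integral_finsetSum fun a _ => (continuous_intervalIntegral_sub
    (f := fun θ => P a * cos (θ * (S a - t))) (by fun_prop) δ).intervalIntegrable 0 δ]
  exact intervalIntegral.integral_congr fun u _ => (intervalIntegral.integral_finsetSum
    fun a _ => Continuous.intervalIntegrable (by fun_prop) 0 δ).symm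

theorem sum_mul_fejerKernel_le (P S : α → ℝ) (t : ℝ) {δ : ℝ} (hδ : 0 ≤ δ) :
    ∑ a, P a * fejerKernel δ (S a - t) ≤
      ∫ u in (0 : ℝ)..δ, ∫ v in (0 : ℝ)..δ, ‖charFn P S (u - v)‖ :=
  (sum_mul_fejerKernel P S δ t).trans_le <| intervalIntegral_intervalIntegral_sub_mono
    (f := fun θ => ∑ a, P a * cos (θ * (S a - t))) (by fun_prop) (continuous_charFn P S).norm hδ
    fun θ _ => sum_mul_cos_le_norm_charFn P S θ t

/-- Esseen's smoothing inequality for the concentration function. -/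
theorem sum_filter_abs_sub_le (hP : ∀ a, 0 ≤ P a) (S : α → ℝ) (t : ℝ) {r : ℝ} (hr : 0 < r) :
    ∑ a with |S a - t| ≤ r, P a ≤
      2 * r ^ 2 * ∫ u in (0 : ℝ)..r⁻¹, ∫ v in (0 : ℝ)..r⁻¹, ‖charFn P S (u - v)‖ := by
  have hδ : 0 ≤ r⁻¹ := (inv_pos.mpr hr).le
  have hkernel : ∀ a, (if |S a - t| ≤ r then P a else 0) ≤
      2 * r ^ 2 * (P a * fejerKernel r⁻¹ (S a - t)) := by
    intro a
    split_ifs with ha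
    · have hlow : r⁻¹ ^ 2 / 2 ≤ fejerKernel r⁻¹ (S a - t) :=
        sq_div_two_le_fejerKernel hδ ((inv_mul_le_one₀ hr).mpr ha)
      calc P a = 2 * r ^ 2 * (P a * (r⁻¹ ^ 2 / 2)) := by field_simp
        _ ≤ _ := by gcongr; exact hP a
    · exact mul_nonneg (by positivity) (mul_nonneg (hP a) (fejerKernel_nonneg _ _))
  rw [Finset.sum_filter]
  calc _ ≤ 2 * r ^ 2 * ∑ a, P a * fejerKernel r⁻¹ (S a - t) := by
        rw [Finset.mul_sum]
        exact Finset.sum_le_sum fun a _ => hkernel a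
    _ ≤ _ := by gcongr; exact sum_mul_fejerKernel_le P S t hδ

theorem sum_filter_abs_sub_le_of_norm_charFn_le (hP : ∀ a, 0 ≤ P a) {S : α → ℝ} {r b : ℝ}
    (hr : 0 < r) (hb : 0 < b) (hS : ∀ θ, |θ| ≤ r⁻¹ → ‖charFn P S θ‖ ≤ exp (-b * θ ^ 2)) (t : ℝ) :
    ∑ a with |S a - t| ≤ r, P a ≤ 2 * r * √(π / b) := by
  have hδ : 0 ≤ r⁻¹ := (inv_pos.mpr hr).le
  calc ∑ a with |S a - t| ≤ r, P a
      ≤ 2 * r ^ 2 * ∫ u in (0 : ℝ)..r⁻¹, ∫ v in (0 : ℝ)..r⁻¹, ‖charFn P S (u - v)‖ :=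
        sum_filter_abs_sub_le hP S t hr
    _ ≤ 2 * r ^ 2 * ∫ u in (0 : ℝ)..r⁻¹, ∫ v in (0 : ℝ)..r⁻¹, exp (-b * (u - v) ^ 2) := by
        gcongr
        exact intervalIntegral_intervalIntegral_sub_mono (g := fun θ => exp (-b * θ ^ 2))
          (continuous_charFn P S).norm (by fun_prop) hδ hS
    _ ≤ 2 * r ^ 2 * (r⁻¹ * √(π / b)) := by
        gcongr
        exact intervalIntegral_intervalIntegral_exp_neg_mul_sub_sq_le hb hδ
    _ = 2 * r * √(π / b) := by field_simp

theorem IsDist.sum_iid_filter_abs_sub_le (hP : IsDist P) {z : α → ℝ} {a b : α} (ha : 0 < P a)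
    (hb : 0 < P b) (hab : z a ≠ z b) {r : ℝ} (hr : |z a - z b| ≤ r) {N : ℕ} (hN : 0 < N) (t : ℝ) :
    ∑ ω : Fin N → α with |∑ n, z (ω n) - t| ≤ r, iid P ω ≤
      2 * r * √(π / (P a * P b * (z a - z b) ^ 2 / π ^ 2)) / √N := by
  have hd : 0 < |z a - z b| := abs_pos.mpr (sub_ne_zero.mpr hab)
  have hr0 : 0 < r := hd.trans_le hr
  set κ := P a * P b * (z a - z b) ^ 2 / π ^ 2
  have hκ : 0 < κ := by have := sq_pos_of_ne_zero (sub_ne_zero.mpr hab); positivity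
  have hcharFn : ∀ θ, |θ| ≤ r⁻¹ →
      ‖charFn (iid P) (fun ω : Fin N → α => ∑ n, z (ω n)) θ‖ ≤ exp (-(N * κ) * θ ^ 2) := by
    intro θ hθ
    have hπ : |θ * (z a - z b)| ≤ π := by
      calc |θ * (z a - z b)| = |θ| * |z a - z b| := abs_mul _ _
        _ ≤ r⁻¹ * r := by gcongr
        _ ≤ π := by rw [inv_mul_cancel₀ hr0.ne']; linarith [pi_gt_three]
    calc _ = ‖charFn P z θ‖ ^ N := by rw [charFn_iid, norm_pow, Fintype.card_fin]
      _ ≤ exp (-κ * θ ^ 2) ^ N :=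
          pow_le_pow_left₀ (norm_nonneg _) (hP.norm_charFn_le_exp_neg_sq z hπ) N
      _ = _ := by rw [← exp_nat_mul]; ring_nf
  calc _ ≤ 2 * r * √(π / (N * κ)) :=
        sum_filter_abs_sub_le_of_norm_charFn_le (iid_nonneg hP.1) hr0
          (mul_pos (Nat.cast_pos.mpr hN) hκ) hcharFn t
    _ = 2 * r * √(π / κ) / √N := by
        rw [mul_comm (N : ℝ), ← div_div, sqrt_div' _ (Nat.cast_nonneg N), mul_div_assoc]

theorem summable_exp_neg_mul_abs_intCast {η : ℝ} (hη : 0 < η) :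
    Summable fun k : ℤ => exp (-η * |(k : ℝ)|) := by
  have hnat : Summable fun n : ℕ => exp (-η * n) := by
    simpa only [mul_comm] using summable_exp_nat_mul_iff.mpr (neg_lt_zero.mpr hη)
  refine Summable.of_nat_of_neg ?_ ?_ <;> simpa using hnat

theorem sum_mul_exp_neg_abs_sub_le (hP : ∀ a, 0 ≤ P a) {S : α → ℝ} {B : ℝ}
    (hB : ∀ t, ∑ a with |S a - t| ≤ 1, P a ≤ B) {η : ℝ} (hη : 0 < η) (t : ℝ) :
    ∑ a, P a * exp (-η * |S a - t|) ≤ exp η * (∑' k : ℤ, exp (-η * |(k : ℝ)|)) * B := by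
  have hB0 : 0 ≤ B := (Finset.sum_nonneg fun a _ => hP a).trans (hB 0)
  have hfloor : ∀ a, |⌊S a - t⌋ - (S a - t)| ≤ 1 := fun a =>
    abs_le.mpr ⟨by linarith [Int.lt_floor_add_one (S a - t)], by linarith [Int.floor_le (S a - t)]⟩
  have hexp : ∀ a, exp (-η * |S a - t|) ≤ exp η * exp (-η * |(⌊S a - t⌋ : ℝ)|) := by
    intro a
    rw [← exp_add, exp_le_exp]
    have habs : |(⌊S a - t⌋ : ℝ)| ≤ |S a - t| + 1 := by
      linarith [abs_sub_abs_le_abs_sub (⌊S a - t⌋ : ℝ) (S a - t), hfloor a]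
    nlinarith
  have hfiber : ∀ k : ℤ, ∑ a with ⌊S a - t⌋ = k, P a ≤ B := by
    refine fun k => le_trans ?_ (hB (k + t))
    refine Finset.sum_le_sum_of_subset_of_nonneg (fun a ha => ?_) fun a _ _ => hP a
    simp only [Finset.mem_filter, Finset.mem_univ, true_and] at ha ⊢
    rw [← ha, abs_sub_comm, add_sub_assoc, ← neg_sub (S a) t, ← sub_eq_add_neg]
    exact hfloor a
  set A : Finset ℤ := Finset.univ.image fun a => ⌊S a - t⌋
  calc ∑ a, P a * exp (-η * |S a - t|)
      ≤ ∑ a, exp η * exp (-η * |(⌊S a - t⌋ : ℝ)|) * P a :=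
        Finset.sum_le_sum fun a _ => by
          rw [mul_comm]; exact mul_le_mul_of_nonneg_right (hexp a) (hP a)
    _ = ∑ k ∈ A, ∑ a with ⌊S a - t⌋ = k, exp η * exp (-η * |(⌊S a - t⌋ : ℝ)|) * P a :=
        (Finset.sum_fiberwise_of_maps_to (fun a ha => Finset.mem_image_of_mem _ ha) _).symm
    _ = ∑ k ∈ A, exp η * exp (-η * |(k : ℝ)|) * ∑ a with ⌊S a - t⌋ = k, P a :=
        Finset.sum_congr rfl fun k _ => by
          rw [Finset.mul_sum]
          exact Finset.sum_congr rfl fun a ha => by rw [(Finset.mem_filter.mp ha).2]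
    _ ≤ ∑ k ∈ A, exp η * exp (-η * |(k : ℝ)|) * B := by gcongr with k; exact hfiber k
    _ = exp η * (∑ k ∈ A, exp (-η * |(k : ℝ)|)) * B := by rw [← Finset.sum_mul, ← Finset.mul_sum]
    _ ≤ exp η * (∑' k : ℤ, exp (-η * |(k : ℝ)|)) * B := by
        gcongr
        exact (summable_exp_neg_mul_abs_intCast hη).sum_le_tsum _ fun _ _ => (exp_pos _).le

theorem IsDist.exists_sum_iid_mul_exp_neg_abs_sub_le (hP : IsDist P) {z : α → ℝ} {a b : α}
    (ha : 0 < P a) (hb : 0 < P b) (hab : z a ≠ z b) {η : ℝ} (hη : 0 < η) :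
    ∃ K, 0 < K ∧ ∀ N : ℕ, 0 < N → ∀ t,
      ∑ ω : Fin N → α, iid P ω * exp (-η * |∑ n, z (ω n) - t|) ≤ K / √N := by
  set r := max 1 |z a - z b|
  have hr : 0 < r := zero_lt_one.trans_le (le_max_left _ _)
  set C := 2 * r * √(π / (P a * P b * (z a - z b) ^ 2 / π ^ 2))
  have hC : 0 < C := by
    have hsq := sq_pos_of_ne_zero (sub_ne_zero.mpr hab)
    exact mul_pos (mul_pos two_pos hr) (sqrt_pos.mpr (div_pos pi_pos
      (div_pos (mul_pos (mul_pos ha hb) hsq) (sq_pos_of_pos pi_pos))))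
  have hunit : ∀ N : ℕ, 0 < N → ∀ t,
      ∑ ω : Fin N → α with |∑ n, z (ω n) - t| ≤ 1, iid P ω ≤ C / √N := fun N hN t =>
    (Finset.sum_le_sum_of_subset_of_nonneg
      (Finset.monotone_filter_right _ fun ω _ h => h.trans (le_max_left _ _))
      fun ω _ _ => iid_nonneg hP.1 ω).trans
      (hP.sum_iid_filter_abs_sub_le ha hb hab (le_max_right _ _) hN t)
  have hT : 0 < ∑' k : ℤ, exp (-η * |(k : ℝ)|) :=
    (summable_exp_neg_mul_abs_intCast hη).tsum_pos (fun _ => (exp_pos _).le) 0 (exp_pos _)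
  refine ⟨exp η * (∑' k : ℤ, exp (-η * |(k : ℝ)|)) * C,
    mul_pos (mul_pos (exp_pos η) hT) hC, fun N hN t => ?_⟩
  rw [mul_div_assoc]
  exact sum_mul_exp_neg_abs_sub_le (iid_nonneg hP.1) (hunit N hN) hη t

end Concentration

section Tilting

variable {α : Type*} [Fintype α] {P z : α → ℝ}

/-- The moment generating function `E[e^{-ρz}]` of `-z` under `P`, which normalizes `tilt P z ρ`. -/
noncomputable def partitionSum (P z : α → ℝ) (ρ : ℝ) : ℝ := ∑ a, P a * exp (-ρ * z a)

/-- The exponentially tilted distribution, with density proportional to `e^{-ρz}` relative to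
`P`. -/
noncomputable def tilt (P z : α → ℝ) (ρ : ℝ) (a : α) : ℝ :=
  P a * exp (-ρ * z a) / partitionSum P z ρ

theorem IsDist.partitionSum_pos (hP : IsDist P) (z : α → ℝ) (ρ : ℝ) : 0 < partitionSum P z ρ := by
  obtain ⟨a, ha⟩ := hP.exists_pos
  exact Finset.sum_pos' (fun a _ => mul_nonneg (hP.1 a) (exp_pos _).le)
    ⟨a, Finset.mem_univ a, mul_pos ha (exp_pos _)⟩

theorem IsDist.tilt_pos (hP : IsDist P) (z : α → ℝ) (ρ : ℝ) {a : α} (ha : 0 < P a) :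
    0 < tilt P z ρ a :=
  div_pos (mul_pos ha (exp_pos _)) (hP.partitionSum_pos z ρ)

theorem isDist_tilt (hP : IsDist P) (z : α → ℝ) (ρ : ℝ) : IsDist (tilt P z ρ) :=
  ⟨fun a => div_nonneg (mul_nonneg (hP.1 a) (exp_pos _).le) (hP.partitionSum_pos z ρ).le,
    (Finset.sum_div _ _ _).symm.trans (div_self (hP.partitionSum_pos z ρ).ne')⟩

theorem IsDist.tilt_zero (hP : IsDist P) (z : α → ℝ) : tilt P z 0 = P := by
  ext a
  simp [tilt, partitionSum, hP.2]

theorem IsDist.hasDerivAt_neg_log_partitionSum (hP : IsDist P) (z : α → ℝ) (ρ : ℝ) :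
    HasDerivAt (fun ρ => -log (partitionSum P z ρ)) (∑ a, tilt P z ρ a * z a) ρ := by
  have hderiv : HasDerivAt (partitionSum P z) (∑ a, P a * (exp (-ρ * z a) * (-1 * z a))) ρ :=
    HasDerivAt.fun_sum fun a _ =>
      (((hasDerivAt_id ρ).neg.mul_const (z a)).exp).const_mul (P a)
  refine (hderiv.log (hP.partitionSum_pos z ρ).ne').neg.congr_deriv ?_
  simp only [tilt, neg_one_mul, mul_neg, Finset.sum_neg_distrib, neg_div, neg_neg, Finset.sum_div,
    mul_assoc, div_mul_eq_mul_div]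

theorem IsDist.sum_tilt_mul_eq (hP : IsDist P) {b : α} (hz : ∀ a, 0 < P a → z a = z b) (ρ : ℝ) :
    ∑ a, tilt P z ρ a * z a = z b := by
  have hconst : ∀ a, tilt P z ρ a * z a = tilt P z ρ a * z b := by
    intro a
    rcases (hP.1 a).eq_or_lt with ha | ha
    · simp only [tilt, ← ha, zero_mul, zero_div]
    · rw [hz a ha]
  rw [Finset.sum_congr rfl fun a _ => hconst a, ← Finset.sum_mul, (isDist_tilt hP z ρ).2, one_mul]

theorem IsDist.exists_ne_of_sum_tilt_mul_ne (hP : IsDist P) {ρ ρ' : ℝ}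
    (h : ∑ a, tilt P z ρ a * z a ≠ ∑ a, tilt P z ρ' a * z a) :
    ∃ a b, 0 < P a ∧ 0 < P b ∧ z a ≠ z b := by
  contrapose! h
  obtain ⟨b, hb⟩ := hP.exists_pos
  have hz : ∀ a, 0 < P a → z a = z b := fun a ha => h a b ha hb
  rw [hP.sum_tilt_mul_eq hz, hP.sum_tilt_mul_eq hz]

theorem IsDist.iid_mul_exp_eq (hP : IsDist P) (z : α → ℝ) (ρ : ℝ) {N : ℕ} (ω : Fin N → α) :
    iid P ω * exp (-ρ * ∑ n, z (ω n)) = partitionSum P z ρ ^ N * iid (tilt P z ρ) ω := by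
  have hG := (hP.partitionSum_pos z ρ).ne'
  simp only [iid, tilt, Finset.prod_div_distrib, Finset.prod_mul_distrib, ← exp_sum,
    ← Finset.mul_sum, Finset.prod_const, Finset.card_univ, Fintype.card_fin]
  field_simp

theorem min_one_exp_neg_le {ρ η : ℝ} (hηρ : η ≤ ρ) (hη : η ≤ 1 - ρ) (t : ℝ) :
    min 1 (exp (-t)) ≤ exp (-ρ * t) * exp (-η * |t|) := by
  rw [← exp_add]
  rcases le_total 0 t with ht | ht
  · refine (min_le_right _ _).trans (exp_le_exp.mpr ?_)
    rw [abs_of_nonneg ht]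
    nlinarith
  · refine (min_le_left _ _).trans (one_le_exp ?_)
    rw [abs_of_nonpos ht]
    nlinarith

theorem IsDist.sum_iid_mul_min_one_exp_le (hP : IsDist P) (z : α → ℝ) {ρ η : ℝ} (hηρ : η ≤ ρ)
    (hη : η ≤ 1 - ρ) (N : ℕ) (R : ℝ) :
    ∑ ω : Fin N → α, iid P ω * min 1 (exp (N * R - ∑ n, z (ω n))) ≤
      exp (-N * (-ρ * R + -log (partitionSum P z ρ))) *
        ∑ ω : Fin N → α, iid (tilt P z ρ) ω * exp (-η * |∑ n, z (ω n) - N * R|) := by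
  have hexponent : exp (-N * (-ρ * R + -log (partitionSum P z ρ))) =
      exp (ρ * (N * R)) * partitionSum P z ρ ^ N := by
    rw [← exp_log (hP.partitionSum_pos z ρ), ← exp_nat_mul, ← exp_add, log_exp]
    ring_nf
  rw [Finset.mul_sum]
  refine Finset.sum_le_sum fun ω _ => ?_
  set S := ∑ n, z (ω n)
  calc iid P ω * min 1 (exp (N * R - S))
      ≤ iid P ω * (exp (-ρ * (S - N * R)) * exp (-η * |S - N * R|)) := by
        rw [← neg_sub S]
        exact mul_le_mul_of_nonneg_left (min_one_exp_neg_le hηρ hη _) (iid_nonneg hP.1 ω)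
    _ = exp (ρ * (N * R)) * (iid P ω * exp (-ρ * S)) * exp (-η * |S - N * R|) := by
        rw [show -ρ * (S - N * R) = ρ * (N * R) + -ρ * S by ring, exp_add]
        ring
    _ = _ := by
        rw [hP.iid_mul_exp_eq, hexponent]
        ring

theorem IsDist.exists_sum_iid_mul_min_one_exp_le (hP : IsDist P) {a b : α} (ha : 0 < P a)
    (hb : 0 < P b) (hab : z a ≠ z b) {ρ : ℝ} (hρ : ρ ∈ Set.Ioo (0 : ℝ) 1) :
    ∃ K, 0 < K ∧ ∀ N : ℕ, 0 < N → ∀ R,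
      ∑ ω : Fin N → α, iid P ω * min 1 (exp (N * R - ∑ n, z (ω n))) ≤
        K / √N * exp (-N * (-ρ * R + -log (partitionSum P z ρ))) := by
  obtain ⟨K, hK, hbound⟩ := (isDist_tilt hP z ρ).exists_sum_iid_mul_exp_neg_abs_sub_le
    (hP.tilt_pos z ρ ha) (hP.tilt_pos z ρ hb) hab (lt_min hρ.1 (sub_pos.mpr hρ.2))
  refine ⟨K, hK, fun N hN R => (hP.sum_iid_mul_min_one_exp_le z (min_le_left ρ (1 - ρ))
    (min_le_right ρ (1 - ρ)) N R).trans ?_⟩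
  rw [mul_comm]
  exact mul_le_mul_of_nonneg_right (hbound N hN _) (exp_pos _).le

end Tilting

theorem exists_isMaxOn_Icc_mem_Ioo {f : ℝ → ℝ} {a b da db : ℝ} (hab : a < b)
    (hf : ContinuousOn f (Set.Icc a b)) (ha : HasDerivWithinAt f da (Set.Icc a b) a)
    (hda : 0 < da) (hb : HasDerivWithinAt f db (Set.Icc a b) b) (hdb : db < 0) :
    ∃ x ∈ Set.Ioo a b, IsMaxOn f (Set.Icc a b) x := by
  obtain ⟨x, hx, hmax⟩ := isCompact_Icc.exists_isMaxOn (Set.nonempty_Icc.mpr hab.le) hf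
  refine ⟨x, ⟨hx.1.lt_of_ne ?_, hx.2.lt_of_ne ?_⟩, hmax⟩
  · rintro rfl
    have hcone : b - a ∈ posTangentConeAt (Set.Icc a b) a :=
      sub_mem_posTangentConeAt_of_segment_subset (segment_eq_Icc hab.le).subset
    have hle : (b - a) * da ≤ 0 := by
      simpa using hmax.localize.hasFDerivWithinAt_nonpos ha.hasFDerivWithinAt hcone
    nlinarith
  · rintro rfl
    have hcone : a - x ∈ posTangentConeAt (Set.Icc a x) x :=
      sub_mem_posTangentConeAt_of_segment_subset
        ((segment_symm ℝ x a).trans (segment_eq_Icc hab.le)).subset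
    have hle : (a - x) * db ≤ 0 := by
      simpa using hmax.localize.hasFDerivWithinAt_nonpos hb.hasFDerivWithinAt hcone
    nlinarith

section RandomCoding

variable {ι : Type*} [Fintype ι] [DecidableEq ι]

theorem mul_ite_exists_le_sum_erase {w : ι → ℝ} (hw : ∀ i, 0 ≤ w i) (i : ι) :
    w i * (if ∃ j, j ≠ i ∧ w i ≤ w j then (1 : ℝ) else 0) ≤
      ∑ j ∈ Finset.univ.erase i, w i * if 0 < w j then (1 : ℝ) else 0 := by
  have hnonneg : ∀ j ∈ Finset.univ.erase i, 0 ≤ w i * if 0 < w j then (1 : ℝ) else 0 :=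
    fun _ _ => mul_nonneg (hw i) (by positivity)
  split_ifs with h
  · obtain ⟨j, hne, hle⟩ := h
    rcases (hw i).eq_or_lt with hzero | hpos
    · simp [← hzero]
    · refine le_trans ?_ (Finset.single_le_sum hnonneg
        (Finset.mem_erase.mpr ⟨hne, Finset.mem_univ j⟩))
      rw [if_pos (hpos.trans_le hle)]
  · rw [mul_zero]
    exact Finset.sum_nonneg hnonneg

theorem sum_iid_mul_ite_exists_le {A : Type*} [Fintype A] {P : A → ℝ} (hP : IsDist P)
    {w : A → ℝ} (hw : ∀ a, 0 ≤ w a) (i : ι) :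
    ∑ c : ι → A, iid P c *
        (w (c i) * if ∃ j, j ≠ i ∧ w (c i) ≤ w (c j) then (1 : ℝ) else 0) ≤
      (∑ a, P a * w a) * min 1 ((Fintype.card ι - 1) * ∑ a with 0 < w a, P a) := by
  rw [mul_min_of_nonneg _ _ (Finset.sum_nonneg fun a _ => mul_nonneg (hP.1 a) (hw a)), mul_one]
  refine le_min ?_ ?_
  · rw [← sum_iid_mul_apply hP.2 i w]
    refine Finset.sum_le_sum fun c _ => mul_le_mul_of_nonneg_left ?_ (iid_nonneg hP.1 c)
    exact mul_le_of_le_one_right (hw _) (by split_ifs <;> norm_num)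
  · calc _ ≤ ∑ c : ι → A, iid P c *
          ∑ j ∈ Finset.univ.erase i, w (c i) * if 0 < w (c j) then (1 : ℝ) else 0 :=
          Finset.sum_le_sum fun c _ => mul_le_mul_of_nonneg_left
            (mul_ite_exists_le_sum_erase (fun j => hw (c j)) i) (iid_nonneg hP.1 c)
      _ = ∑ _j ∈ Finset.univ.erase i, (∑ a, P a * w a) *
          ∑ a, P a * if 0 < w a then (1 : ℝ) else 0 := by
          simp only [Finset.mul_sum (Finset.univ.erase i)]
          rw [Finset.sum_comm]
          exact Finset.sum_congr rfl fun _ hj =>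
            sum_iid_mul_apply_mul_apply hP.2 (Finset.ne_of_mem_erase hj).symm w
              fun a => if 0 < w a then (1 : ℝ) else 0
      _ = _ := by
          rw [Finset.sum_const, Finset.card_erase_of_mem (Finset.mem_univ i), Finset.card_univ,
            nsmul_eq_mul, Nat.cast_pred (Fintype.card_pos_iff.mpr ⟨i⟩), Finset.sum_filter]
          simp only [mul_ite, mul_one, mul_zero]
          ring

end RandomCoding

section Channel

variable {X Y : Type*} {W : X → Y → ℝ} {Q : X → ℝ}

theorem Wn_nonneg (hW : ∀ x y, 0 ≤ W x y) {N : ℕ} (x : Fin N → X) (y : Fin N → Y) :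
    0 ≤ Wn W x y :=
  Finset.prod_nonneg fun n _ => hW (x n) (y n)

theorem Wn_pos_iff (hW : ∀ x y, 0 ≤ W x y) {N : ℕ} {x : Fin N → X} {y : Fin N → Y} :
    0 < Wn W x y ↔ ∀ n, 0 < W (x n) (y n) := by
  simp only [Wn, (Finset.prod_nonneg fun n _ => hW (x n) (y n)).lt_iff_ne',
    fun n => (hW (x n) (y n)).lt_iff_ne', Finset.prod_ne_zero_iff, Finset.mem_univ, true_imp_iff]

variable [Fintype X]

/-- The output distribution of the channel `W` with input distribution `Q`. -/
noncomputable def outDist (W : X → Y → ℝ) (Q : X → ℝ) (y : Y) : ℝ := ∑ x, Q x * W x y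

/-- The `Q`-probability of the inputs from which the output `y` can be reached. -/
noncomputable def reachProb (W : X → Y → ℝ) (Q : X → ℝ) (y : Y) : ℝ := ∑ x with 0 < W x y, Q x

/-- The information density of a singular pair, `log (W(y|x) / outDist W Q y)`, which depends only
on the output `y`. At outputs of probability zero it may take the junk value `log 0 = 0`. -/
noncomputable def infoDensity (W : X → Y → ℝ) (Q : X → ℝ) (y : Y) : ℝ := -log (reachProb W Q y)

theorem outDist_nonneg (hW : ∀ x y, 0 ≤ W x y) (hQ : ∀ x, 0 ≤ Q x) (y : Y) : 0 ≤ outDist W Q y :=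
  Finset.sum_nonneg fun x _ => mul_nonneg (hQ x) (hW x y)

theorem isDist_outDist [Fintype Y] (hW : IsChannel W) (hQ : IsDist Q) : IsDist (outDist W Q) := by
  refine ⟨outDist_nonneg hW.1 hQ.1, ?_⟩
  simp only [outDist]
  rw [Finset.sum_comm]
  simp only [← Finset.mul_sum, hW.2, mul_one, hQ.2]

theorem reachProb_nonneg (hQ : ∀ x, 0 ≤ Q x) (y : Y) : 0 ≤ reachProb W Q y :=
  Finset.sum_nonneg fun x _ => hQ x

theorem reachProb_pos (hQ : ∀ x, 0 ≤ Q x) {x : X} {y : Y} (hQx : 0 < Q x) (hWx : 0 < W x y) :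
    0 < reachProb W Q y :=
  Finset.sum_pos' (fun x _ => hQ x)
    ⟨x, Finset.mem_filter.mpr ⟨Finset.mem_univ x, hWx⟩, hQx⟩

theorem reachProb_pos_of_outDist_ne_zero (hW : ∀ x y, 0 ≤ W x y) (hQ : ∀ x, 0 ≤ Q x) {y : Y}
    (hy : outDist W Q y ≠ 0) : 0 < reachProb W Q y := by
  obtain ⟨x, -, hx⟩ := Finset.exists_ne_zero_of_sum_ne_zero hy
  have hQx : 0 < Q x := (hQ x).lt_of_ne' (left_ne_zero_of_mul hx)
  have hWx : 0 < W x y := (hW x y).lt_of_ne' (right_ne_zero_of_mul hx)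
  exact reachProb_pos hQ hQx hWx

theorem outDist_Wn (W : X → Y → ℝ) (Q : X → ℝ) {N : ℕ} (y : Fin N → Y) :
    outDist (Wn W) (iid Q) y = iid (outDist W Q) y := by
  simp only [outDist, Wn, iid, ← Finset.prod_mul_distrib]
  exact (Fintype.prod_sum fun n x => Q x * W x (y n)).symm

theorem reachProb_Wn (hW : ∀ x y, 0 ≤ W x y) (Q : X → ℝ) {N : ℕ} (y : Fin N → Y) :
    reachProb (Wn W) (iid Q) y = iid (reachProb W Q) y := by
  simp only [reachProb, iid, Finset.sum_filter, Wn_pos_iff hW]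
  rw [Fintype.prod_sum]
  simp only [Finset.prod_ite_zero, Finset.mem_univ, true_imp_iff]

theorem exp_neg_sum_infoDensity {ι : Type*} [Fintype ι] {y : ι → Y}
    (hy : ∀ i, 0 < reachProb W Q (y i)) :
    exp (-∑ i, infoDensity W Q (y i)) = iid (reachProb W Q) y := by
  simp only [← Finset.sum_neg_distrib, exp_sum, infoDensity, neg_neg, exp_log (hy _), iid]

theorem nMsgs_sub_one_le (N : ℕ) (R : ℝ) : (nMsgs N R : ℝ) - 1 ≤ exp (N * R) :=
  sub_le_iff_le_add.mpr (Nat.ceil_lt_add_one (exp_pos _).le).le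

theorem nMsgs_pos (N : ℕ) (R : ℝ) : 0 < nMsgs N R := Nat.ceil_pos.mpr (exp_pos _)

theorem sum_iid_iid_mul_ite_exists_le (hW : ∀ x y, 0 ≤ W x y) (hQ : IsDist Q) {N : ℕ} {R : ℝ}
    (m : Fin (nMsgs N R)) (y : Fin N → Y) :
    ∑ c : Fin (nMsgs N R) → Fin N → X, iid (iid Q) c * (Wn W (c m) y *
        if ∃ m', m' ≠ m ∧ Wn W (c m) y ≤ Wn W (c m') y then (1 : ℝ) else 0) ≤
      iid (outDist W Q) y * min 1 (exp (N * R - ∑ n, infoDensity W Q (y n))) := by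
  calc _ ≤ (∑ x, iid Q x * Wn W x y) *
          min 1 ((nMsgs N R - 1) * ∑ x with 0 < Wn W x y, iid Q x) := by
        convert sum_iid_mul_ite_exists_le (isDist_iid hQ) (fun x => Wn_nonneg hW x y) m
        exact (Fintype.card_fin _).symm
    _ = iid (outDist W Q) y * min 1 ((nMsgs N R - 1) * iid (reachProb W Q) y) := by
        rw [← outDist_Wn, ← reachProb_Wn hW, outDist, reachProb]
    _ ≤ _ := by
        by_cases hy : ∃ n, outDist W Q (y n) = 0
        · obtain ⟨n, hn⟩ := hy
          simp only [show iid (outDist W Q) y = 0 from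
            Finset.prod_eq_zero (Finset.mem_univ n) hn, zero_mul, le_refl]
        · push Not at hy
          rw [sub_eq_add_neg (N * R), exp_add,
            exp_neg_sum_infoDensity fun n => reachProb_pos_of_outDist_ne_zero hW hQ.1 (hy n)]
          gcongr
          · exact iid_nonneg (outDist_nonneg hW hQ.1) y
          · exact iid_nonneg (reachProb_nonneg hQ.1) y
          · exact nMsgs_sub_one_le N R

theorem Pbar_le [Fintype Y] (hW : ∀ x y, 0 ≤ W x y) (hQ : IsDist Q) (N : ℕ) (R : ℝ) :
    Pbar W Q N R ≤ ∑ y : Fin N → Y,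
      iid (outDist W Q) y * min 1 (exp (N * R - ∑ n, infoDensity W Q (y n))) := by
  have hM : (nMsgs N R : ℝ) ≠ 0 := Nat.cast_ne_zero.mpr (nMsgs_pos N R).ne'
  set B := ∑ y : Fin N → Y,
      iid (outDist W Q) y * min 1 (exp (N * R - ∑ n, infoDensity W Q (y n)))
  calc Pbar W Q N R = (nMsgs N R : ℝ)⁻¹ * ∑ m, ∑ y : Fin N → Y,
        ∑ c : Fin (nMsgs N R) → Fin N → X, iid (iid Q) c * (Wn W (c m) y *
          if ∃ m', m' ≠ m ∧ Wn W (c m) y ≤ Wn W (c m') y then (1 : ℝ) else 0) := by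
        simp only [Pbar, Finset.mul_sum, mul_left_comm _ (nMsgs N R : ℝ)⁻¹]
        rw [Finset.sum_comm]
        exact Finset.sum_congr rfl fun m _ => Finset.sum_comm
    _ ≤ (nMsgs N R : ℝ)⁻¹ * ∑ _m : Fin (nMsgs N R), B := by
        gcongr with m _
        refine Finset.sum_le_sum fun y _ => ?_
        exact sum_iid_iid_mul_ite_exists_le hW hQ m y
    _ = B := by
        rw [Finset.sum_const, Finset.card_univ, Fintype.card_fin, nsmul_eq_mul,
          inv_mul_cancel_left₀ hM]

theorem Singular.reachProb_mul (hsing : Singular W Q) (hW : ∀ x y, 0 ≤ W x y)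
    (hQ : ∀ x, 0 ≤ Q x) {x : X} {y : Y} (hQx : 0 < Q x) (hWx : 0 < W x y) :
    reachProb W Q y * W x y = outDist W Q y := by
  rw [reachProb, Finset.sum_filter, Finset.sum_mul]
  refine Finset.sum_congr rfl fun x' _ => ?_
  rcases (hQ x').eq_or_lt with hQx' | hQx'
  · simp [← hQx']
  · rcases (hW x' y).eq_or_lt with hWx' | hWx'
    · simp [← hWx']
    · rw [if_pos hWx', hsing x y x' (by positivity)]

theorem Singular.sum_mul_comp (hsing : Singular W Q) (hW : ∀ x y, 0 ≤ W x y)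
    (hQ : ∀ x, 0 ≤ Q x) {φ : ℝ → ℝ} (hφ : φ 0 = 0) (y : Y) :
    ∑ x, Q x * φ (W x y) = reachProb W Q y * φ (outDist W Q y / reachProb W Q y) := by
  have hφW : ∀ x, 0 < Q x → 0 < W x y →
      φ (W x y) = φ (outDist W Q y / reachProb W Q y) := by
    intro x hQx hWx
    rw [← hsing.reachProb_mul hW hQ hQx hWx,
      mul_div_cancel_left₀ _ (reachProb_pos hQ hQx hWx).ne']
  nth_rewrite 1 [reachProb]
  rw [Finset.sum_filter, Finset.sum_mul]
  refine Finset.sum_congr rfl fun x _ => ?_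
  rcases (hQ x).eq_or_lt with hQx | hQx
  · simp [← hQx]
  · rcases (hW x y).eq_or_lt with hWx | hWx
    · simp [← hWx, hφ]
    · rw [if_pos hWx, hφW x hQx hWx]

variable [Fintype Y]

theorem Singular.Eo_eq (hsing : Singular W Q) (hW : ∀ x y, 0 ≤ W x y) (hQ : ∀ x, 0 ≤ Q x) {ρ : ℝ}
    (hρ : -1 < ρ) :
    Eo W ρ Q = -log (partitionSum (outDist W Q) (infoDensity W Q) ρ) := by
  have hρ' : 0 < 1 + ρ := by linarith
  have hφ : (0 : ℝ) ^ (1 / (1 + ρ)) = 0 := zero_rpow (one_div_pos.mpr hρ').ne'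
  rw [Eo, partitionSum]
  congr 2
  refine Finset.sum_congr rfl fun y _ => ?_
  rw [hsing.sum_mul_comp (φ := fun w => w ^ (1 / (1 + ρ))) hW hQ hφ]
  by_cases hy : outDist W Q y = 0
  · rw [hy, zero_div, hφ, mul_zero, zero_rpow hρ'.ne', zero_mul]
  · have hreach := reachProb_pos_of_outDist_ne_zero hW hQ hy
    have hout : 0 ≤ outDist W Q y := outDist_nonneg hW hQ y
    have hexp : exp (-ρ * infoDensity W Q y) = reachProb W Q y ^ ρ := by
      rw [rpow_def_of_pos hreach, infoDensity, neg_mul_neg, mul_comm]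
    rw [hexp, mul_rpow hreach.le (by positivity), ← rpow_mul (by positivity),
      one_div_mul_cancel hρ'.ne', rpow_one, rpow_add hreach, rpow_one]
    field_simp

theorem Singular.MI_eq (hsing : Singular W Q) (hW : ∀ x y, 0 ≤ W x y) (hQ : ∀ x, 0 ≤ Q x) :
    MI W Q = ∑ y, outDist W Q y * infoDensity W Q y := by
  rw [MI, Finset.sum_comm]
  refine Finset.sum_congr rfl fun y _ => ?_
  simp only [mul_assoc, ← show outDist W Q y = ∑ x, Q x * W x y from rfl]
  rw [hsing.sum_mul_comp (φ := fun w => w * log (w / outDist W Q y)) hW hQ (zero_mul _)]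
  by_cases hy : outDist W Q y = 0
  · simp [hy]
  · have hreach := (reachProb_pos_of_outDist_ne_zero hW hQ hy).ne'
    rw [div_right_comm, div_self hy, one_div, log_inv, ← mul_assoc, mul_div_cancel₀ _ hreach,
      infoDensity]

theorem Singular.hasDerivAt_Eo (hsing : Singular W Q) (hW : IsChannel W) (hQ : IsDist Q) {ρ : ℝ}
    (hρ : -1 < ρ) :
    HasDerivAt (fun ρ => Eo W ρ Q)
      (∑ y, tilt (outDist W Q) (infoDensity W Q) ρ y * infoDensity W Q y) ρ :=
  ((isDist_outDist hW hQ).hasDerivAt_neg_log_partitionSum _ ρ).congr_of_eventuallyEq <|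
    (lt_mem_nhds hρ).mono fun _ hs => hsing.Eo_eq hW.1 hQ.1 hs

theorem Singular.RcrQ_eq (hsing : Singular W Q) (hW : IsChannel W) (hQ : IsDist Q) :
    RcrQ W Q = ∑ y, tilt (outDist W Q) (infoDensity W Q) 1 y * infoDensity W Q y :=
  (hsing.hasDerivAt_Eo hW hQ (by norm_num)).deriv

theorem Singular.MI_eq_sum_tilt (hsing : Singular W Q) (hW : IsChannel W) (hQ : IsDist Q) :
    MI W Q = ∑ y, tilt (outDist W Q) (infoDensity W Q) 0 y * infoDensity W Q y := by
  rw [(isDist_outDist hW hQ).tilt_zero, hsing.MI_eq hW.1 hQ.1]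

theorem Singular.exists_infoDensity_ne (hsing : Singular W Q) (hW : IsChannel W) (hQ : IsDist Q)
    (hne : RcrQ W Q ≠ MI W Q) :
    ∃ a b, 0 < outDist W Q a ∧ 0 < outDist W Q b ∧ infoDensity W Q a ≠ infoDensity W Q b := by
  rw [hsing.RcrQ_eq hW hQ, hsing.MI_eq_sum_tilt hW hQ] at hne
  exact (isDist_outDist hW hQ).exists_ne_of_sum_tilt_mul_ne hne

theorem Singular.exists_ErQ_eq (hsing : Singular W Q) (hW : IsChannel W) (hQ : IsDist Q) {R : ℝ}
    (hRcr : RcrQ W Q < R) (hMI : R < MI W Q) :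
    ∃ ρ ∈ Set.Ioo (0 : ℝ) 1, ErQ W R Q = -ρ * R + Eo W ρ Q := by
  have hderiv : ∀ ρ, -1 < ρ → HasDerivAt (fun ρ => -ρ * R + Eo W ρ Q)
      (-1 * R + ∑ y, tilt (outDist W Q) (infoDensity W Q) ρ y * infoDensity W Q y) ρ :=
    fun ρ hρ => ((hasDerivAt_id ρ).neg.mul_const R).add (hsing.hasDerivAt_Eo hW hQ hρ)
  rw [hsing.RcrQ_eq hW hQ] at hRcr
  rw [hsing.MI_eq_sum_tilt hW hQ] at hMI
  obtain ⟨ρ, hρ, hmax⟩ := exists_isMaxOn_Icc_mem_Ioo (zero_lt_one' ℝ)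
    (fun ρ hρ => (hderiv ρ (by linarith [hρ.1])).continuousAt.continuousWithinAt)
    (hderiv 0 (by norm_num)).hasDerivWithinAt (by linarith)
    (hderiv 1 (by norm_num)).hasDerivWithinAt (by linarith)
  refine ⟨ρ, hρ, IsGreatest.csSup_eq ⟨Set.mem_image_of_mem _ (Set.Ioo_subset_Icc_self hρ), ?_⟩⟩
  rintro _ ⟨s, hs, rfl⟩
  exact hmax hs

theorem statement0_general (hW : IsChannel W) (hQ : IsDist Q) {R : ℝ} (hsing : Singular W Q)
    (hRcr : RcrQ W Q < R) (hMI : R < MI W Q) :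
    ∃ K : ℝ, 0 < K ∧ ∀ N : ℕ, 0 < N →
      Pbar W Q N R ≤ K / √N * exp (-(N : ℝ) * ErQ W R Q) := by
  obtain ⟨ρ, hρ, hEr⟩ := hsing.exists_ErQ_eq hW hQ hRcr hMI
  obtain ⟨a, b, ha, hb, hab⟩ := hsing.exists_infoDensity_ne hW hQ (hRcr.trans hMI).ne
  obtain ⟨K, hK, hbound⟩ :=
    (isDist_outDist hW hQ).exists_sum_iid_mul_min_one_exp_le ha hb hab hρ
  refine ⟨K, hK, fun N hN => (Pbar_le hW.1 hQ N R).trans ?_⟩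
  rw [hEr, hsing.Eo_eq hW.1 hQ.1 (by linarith [hρ.1])]
  exact hbound N hN R

end Channel

/-- Refined random coding bound, singular case: ensemble average error
probability is at most `K₁ / √N · exp(-N E_r(R,Q))`. -/
theorem statement0 {X Y : Type*} [Fintype X] [Fintype Y] [Nonempty X] [Nonempty Y]
    (W : X → Y → ℝ) (hW : IsChannel W) (hcr : Rcr W < Capacity W)
    (Q : X → ℝ) (hQ : IsDist Q) (R : ℝ) (hR : 0 < R)
    (hsing : Singular W Q) (hR1 : RcrQ W Q < R) (hR2 : R < MI W Q) :
    ∃ K : ℝ, 0 < K ∧ ∀ N : ℕ, 0 < N →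
      Pbar W Q N R ≤ K / Real.sqrt N * Real.exp (-(N : ℝ) * ErQ W R Q) :=
  statement0_general hW hQ hsing hR1 hR2

end RCB
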